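/- For profiles of strict weak orderings, majority dynamics preserves UnanUD-consensus identity: if every preference in a profile P is a strict weak ordering and a is the UnanUD-consensus alternative of P, then for every update order σ, a is the UnanUD-consensus alternative of MD_σ(P). -/

import Mathlib

attribute [local instance] Classical.propDecidable

noncomputable section

/-- A preference over the set of alternatives `A`: a binary relation. -/
abbrev Pref (A : Type) := A → A → Prop

/-- A preference is a strict partial order: irreflexive and transitive. -/
def IsPref {A : Type} (pref : Pref A) : Prop :=
  Irreflexive pref ∧ Transitive pref

variable {A : Type} [Fintype A] [DecidableEq A]

/-- The support `n_P(ab)`: the number of agents preferring `a` to `b` in profile `P`. -/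
def support {n : ℕ} (P : Fin n → Pref A) (a b : A) : ℕ :=
  (Finset.univ.filter fun i => P i a b).card

/-- An update order: a list of ordered pairs of distinct alternatives containing,
for each unordered pair `{a, b}` of distinct alternatives, exactly one of `ab` or `ba`,
each exactly once. -/
def IsUpdateOrder (σ : List (A × A)) : Prop :=
  (∀ p ∈ σ, p.1 ≠ p.2) ∧
  (∀ a b : A, a ≠ b → σ.count (a, b) + σ.count (b, a) = 1)

/-- One step of majority dynamics, discussing the pair `p`: agents already ranking
`p.1` versus `p.2` keep their preference; every other agent adds `p.1 ≻ p.2` if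
`n_P(p.1 p.2) ≥ n_P(p.2 p.1)` (ties broken in favour of the first alternative of the
pair), and otherwise adds `p.2 ≻ p.1`, then takes the transitive closure. -/
def mdStep {n : ℕ} (P : Fin n → Pref A) (p : A × A) : Fin n → Pref A :=
  fun i =>
    if P i p.1 p.2 ∨ P i p.2 p.1 then P i
    else if support P p.2 p.1 ≤ support P p.1 p.2 then
      Relation.TransGen (fun x y => P i x y ∨ (x = p.1 ∧ y = p.2))
    else
      Relation.TransGen (fun x y => P i x y ∨ (x = p.2 ∧ y = p.1))

/-- Majority dynamics `MD_σ(P)`: process the pairs of the update order `σ` in order. -/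
def MD {n : ℕ} (σ : List (A × A)) (P : Fin n → Pref A) : Fin n → Pref A :=
  σ.foldl mdStep P

/-- `a` is a Condorcet winner in `P`. -/
def CondorcetWinner {n : ℕ} (P : Fin n → Pref A) (a : A) : Prop :=
  ∀ b, b ≠ a → support P b a < support P a b

/-- `a` is a Condorcet loser in `P`. -/
def CondorcetLoser {n : ℕ} (P : Fin n → Pref A) (a : A) : Prop :=
  ∀ b, b ≠ a → support P a b < support P b a

/-- `a` is undominated in a preference. -/
def Undominated {A : Type} (pref : Pref A) (a : A) : Prop := ∀ b, ¬ pref b a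

/-- `a` is dominant in a preference. -/
def Dominant {A : Type} (pref : Pref A) (a : A) : Prop := ∀ b, b ≠ a → pref a b

/-- `a` is dominated (by every other alternative) in a preference. -/
def DominatedIn {A : Type} (pref : Pref A) (a : A) : Prop := ∀ b, b ≠ a → pref b a

/-- Number of preferences of `P` in which `a` is undominated. -/
def udCount {n : ℕ} (P : Fin n → Pref A) (a : A) : ℕ :=
  (Finset.univ.filter fun i => Undominated (P i) a).card

/-- Number of preferences of `P` in which `a` is dominant. -/
def domCount {n : ℕ} (P : Fin n → Pref A) (a : A) : ℕ :=
  (Finset.univ.filter fun i => Dominant (P i) a).card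

/-- Number of preferences of `P` in which `a` is dominated. -/
def domdCount {n : ℕ} (P : Fin n → Pref A) (a : A) : ℕ :=
  (Finset.univ.filter fun i => DominatedIn (P i) a).card

/-- `a` is undominated in at least one preference and no alternative is undominated
in strictly more preferences than `a`. -/
def PlurUDTop {n : ℕ} (P : Fin n → Pref A) (a : A) : Prop :=
  0 < udCount P a ∧ ∀ b, udCount P b ≤ udCount P a

/-- `a` is the PlurUD-consensus alternative of `P`. -/
def PlurUDConsensus {n : ℕ} (P : Fin n → Pref A) (a : A) : Prop :=
  PlurUDTop P a ∧ ∀ b, PlurUDTop P b → b = a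

/-- `a` is dominant in at least one preference and no alternative is dominant
in strictly more preferences than `a`. -/
def PlurDomTop {n : ℕ} (P : Fin n → Pref A) (a : A) : Prop :=
  0 < domCount P a ∧ ∀ b, domCount P b ≤ domCount P a

/-- `a` is the PlurDom-consensus alternative of `P`. -/
def PlurDomConsensus {n : ℕ} (P : Fin n → Pref A) (a : A) : Prop :=
  PlurDomTop P a ∧ ∀ b, PlurDomTop P b → b = a

/-- `a` is dominated in at least one preference and no alternative is dominated
in strictly more preferences than `a`. -/
def PlurDomdTop {n : ℕ} (P : Fin n → Pref A) (a : A) : Prop :=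
  0 < domdCount P a ∧ ∀ b, domdCount P b ≤ domdCount P a

/-- `a` is the (unique) plurality dominated alternative of `P`. -/
def PlurDomdConsensus {n : ℕ} (P : Fin n → Pref A) (a : A) : Prop :=
  PlurDomdTop P a ∧ ∀ b, PlurDomdTop P b → b = a

/-- `a` is the MajUD-consensus alternative of `P`: undominated in strictly more than
`n / 2` of the preferences, and the unique alternative with this property. -/
def MajUDConsensus {n : ℕ} (P : Fin n → Pref A) (a : A) : Prop :=
  (n < 2 * udCount P a) ∧ ∀ b, n < 2 * udCount P b → b = a

/-- `a` is the MajDom-consensus alternative of `P`: dominant in strictly more than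
`n / 2` of the preferences (such an alternative is automatically unique). -/
def MajDomConsensus {n : ℕ} (P : Fin n → Pref A) (a : A) : Prop :=
  n < 2 * domCount P a

/-- `a` is the UnanUD-consensus alternative of `P`: undominated in every preference,
and the unique alternative with this property. -/
def UnanUDConsensus {n : ℕ} (P : Fin n → Pref A) (a : A) : Prop :=
  (∀ i, Undominated (P i) a) ∧ ∀ b, (∀ i, Undominated (P i) b) → b = a

/-- `a` is the UnanDom-consensus alternative of `P`: dominant in every preference. -/
def UnanDomConsensus {n : ℕ} (P : Fin n → Pref A) (a : A) : Prop :=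
  ∀ i, Dominant (P i) a

/-- A preference is a strict weak ordering: there is an ordered partition of the
alternatives into levels (given by a level function `f`) such that alternatives in the
same level are incomparable, and `a ≻ b` exactly when `a` is in an earlier level. -/
def IsSWO (pref : Pref A) : Prop :=
  ∃ (k : ℕ) (f : A → Fin k), ∀ a b : A, pref a b ↔ f a < f b

/-! If `a` is undominated for every agent and every other alternative is ranked below `a` by
someone, then `a` wins every pairwise vote unopposed, so no step of the dynamics adds a pair
`x ≻ a`; since pairs are never removed, this situation persists. For strict weak orderings it is
equivalent to UnanUD-consensus: an agent ranking some `c` above `b`, but not above `a`, ranks `a`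
above `b`. -/

section

variable {α : Type} {n : ℕ} {P Q : Fin n → Pref α} {a x y : α}

theorem support_eq_zero_iff : support P x y = 0 ↔ ∀ i, ¬ P i x y := by
  simp [support, Finset.filter_eq_empty_iff]

theorem support_pos_iff : 0 < support P x y ↔ ∃ i, P i x y := by
  simp [support, Finset.card_pos, Finset.filter_nonempty_iff]

theorem support_mono (hPQ : P ≤ Q) : support P x y ≤ support Q x y :=
  Finset.card_le_card (Finset.monotone_filter_right _ fun i _ hi => hPQ i x y hi)

theorem le_mdStep (P : Fin n → Pref α) (p : α × α) : P ≤ mdStep P p := by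
  intro i x y hxy
  unfold mdStep
  split_ifs
  · exact hxy
  · exact .single (.inl hxy)
  · exact .single (.inl hxy)

theorem Undominated.transGen_insert {r : Pref α} (h : Undominated r a) (hy : y ≠ a) :
    Undominated (Relation.TransGen fun u v => r u v ∨ (u = x ∧ v = y)) a := by
  intro b hb
  obtain ⟨c, -, hca | ⟨-, hay⟩⟩ := Relation.TransGen.tail'_iff.mp hb
  · exact h c hca
  · exact hy hay.symm

theorem CondorcetWinner.undominated_mdStep (hwin : CondorcetWinner P a) {p : α × α}
    (hp : p.1 ≠ p.2) {i : Fin n} (h : Undominated (P i) a) : Undominated (mdStep P p i) a := by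
  unfold mdStep
  split_ifs with _ hvote
  · exact h
  · refine h.transGen_insert ?_
    rintro rfl
    exact (hwin p.1 hp).not_ge hvote
  · refine h.transGen_insert ?_
    rintro rfl
    exact hvote (hwin p.2 hp.symm).le

/-- The invariant of majority dynamics: `a` is undominated for every agent and wins every pairwise
majority vote. -/
def UnanUDWinner (P : Fin n → Pref α) (a : α) : Prop :=
  (∀ i, Undominated (P i) a) ∧ CondorcetWinner P a

theorem unanUDWinner_iff :
    UnanUDWinner P a ↔ (∀ i, Undominated (P i) a) ∧ ∀ b, b ≠ a → ∃ i, P i a b := by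
  refine and_congr_right fun hund => forall₂_congr fun b _ => ?_
  rw [support_eq_zero_iff.mpr fun i => hund i b, support_pos_iff]

theorem UnanUDWinner.unanUDConsensus (h : UnanUDWinner P a) : UnanUDConsensus P a := by
  obtain ⟨hund, habove⟩ := unanUDWinner_iff.mp h
  refine ⟨hund, fun b hb => by_contra fun hne => ?_⟩
  obtain ⟨i, hi⟩ := habove b hne
  exact hb i a hi

theorem IsSWO.isOrderConnected {r : Pref α} (h : IsSWO r) : IsOrderConnected α r := by
  obtain ⟨k, f, hf⟩ := h
  refine ⟨fun u v w huw => ?_⟩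
  simp only [hf] at huw ⊢
  exact (lt_or_ge (f u) (f v)).imp_right fun hvu => hvu.trans_lt huw

theorem UnanUDConsensus.unanUDWinner [∀ i, IsOrderConnected α (P i)] (h : UnanUDConsensus P a) :
    UnanUDWinner P a := by
  refine unanUDWinner_iff.mpr ⟨h.1, fun b hb => ?_⟩
  obtain ⟨i, c, hcb⟩ : ∃ i c, P i c b := by
    by_contra! hund
    exact hb (h.2 b hund)
  exact ⟨i, (IsOrderConnected.conn c a b hcb).resolve_left (h.1 i c)⟩

theorem UnanUDWinner.mdStep_of_ne (h : UnanUDWinner P a) {p : α × α} (hp : p.1 ≠ p.2) :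
    UnanUDWinner (mdStep P p) a := by
  have hund : ∀ i, Undominated (mdStep P p i) a := fun i =>
    h.2.undominated_mdStep hp (h.1 i)
  refine ⟨hund, fun b hb => ?_⟩
  calc support (mdStep P p) b a = 0 := support_eq_zero_iff.mpr fun i => hund i b
    _ ≤ support P b a := Nat.zero_le _
    _ < support P a b := h.2 b hb
    _ ≤ support (mdStep P p) a b := support_mono (le_mdStep P p)

theorem UnanUDWinner.MD_of_forall_ne (h : UnanUDWinner P a) {σ : List (α × α)}
    (hσ : ∀ p ∈ σ, p.1 ≠ p.2) : UnanUDWinner (MD σ P) a :=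
  List.foldlRecOn (motive := (UnanUDWinner · a)) σ mdStep h fun _ hQ p hp =>
    hQ.mdStep_of_ne (hσ p hp)

end

theorem stmt_14_general {α : Type} {n : ℕ} (P : Fin n → Pref α) [∀ i, IsOrderConnected α (P i)]
    (a : α) (ha : UnanUDConsensus P a) (σ : List (α × α)) (hσ : ∀ p ∈ σ, p.1 ≠ p.2) :
    UnanUDConsensus (MD σ P) a :=
  (ha.unanUDWinner.MD_of_forall_ne hσ).unanUDConsensus

/-- For profiles of strict weak orderings, majority dynamics preserves
UnanUD-consensus identity. -/
theorem stmt_14 {n : ℕ} (P : Fin n → Pref A) (hP : ∀ i, IsPref (P i))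
    (hswo : ∀ i, IsSWO (P i))
    (a : A) (ha : UnanUDConsensus P a)
    (σ : List (A × A)) (hσ : IsUpdateOrder σ) :
    UnanUDConsensus (MD σ P) a := by
  have := fun i => (hswo i).isOrderConnected
  exact stmt_14_general P a ha σ hσ.1

end
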